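/- arXiv:0902.0433 — 2 statements merged into one kernel-verified Lean document; each statement's English description precedes it below -/
import Mathlib

section
/- For every integer n ≥ 1 one has v₀(f(n+1)) = v₀(n); that is, the sequence (v₀(f(n)))_{n≥2} coincides with the original circle map sequence (v₀(n))_{n≥1}. -/
open scoped Classical

noncomputable section

/-- The Gauss map. -/
def gaussMap (x : ℝ) : ℝ := Int.fract x⁻¹

/-- `pq α k` is the partial quotient `a_{k+1}` of the continued fraction of `α`. -/
def pq (α : ℝ) (k : ℕ) : ℕ := ⌊(gaussMap^[k] α)⁻¹⌋₊

/-- `qd α (n+1)` is the convergent denominator `q_n`; `qd α 0 = q_{-1} = 0`, `qd α 1 = q₀ = 1`. -/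
def qd (α : ℝ) : ℕ → ℕ
  | 0 => 0
  | 1 => 1
  | (n+2) => pq α n * qd α (n+1) + qd α n

/-- The circle map sequence of rotation number `α` (value `true` means letter `1`). -/
def v0 (α : ℝ) (n : ℤ) : Bool := decide (1 - α ≤ Int.fract ((n : ℝ) * α))

/-- The word `(v₀(m+1), …, v₀(m+n))`. -/
def word (α : ℝ) (m n : ℕ) : List Bool :=
  (List.range n).map (fun i => v0 α ((m : ℤ) + 1 + i))

/-- `w` is a factor (admissible word) of `v₀`. -/
def IsFactor (α : ℝ) (w : List Bool) : Prop := ∃ m : ℕ, w = word α m w.length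

/-- `w` occurs as a subword of the prefix `(v₀(1), …, v₀(N))`. -/
def OccursIn (α : ℝ) (w : List Bool) (N : ℕ) : Prop :=
  ∃ m : ℕ, m + w.length ≤ N ∧ w = word α m w.length

/-- `exhaust α n` is `f(n)`: the least `N` such that every factor of length `n`
occurs in `(v₀(1), …, v₀(N))`. -/
def exhaust (α : ℝ) (n : ℕ) : ℕ :=
  sInf {N | ∀ w : List Bool, w.length = n → IsFactor α w → OccursIn α w N}

/-- number of occurrences of `w` in the prefix `(v₀(1), …, v₀(N))`. -/
def occCount (α : ℝ) (w : List Bool) (N : ℕ) : ℕ :=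
  ((Finset.range N).filter (fun m => m + w.length ≤ N ∧ word α m w.length = w)).card

/-- the word `(v(m), v(m+1), …, v(m+n-1))` of a two-sided sequence. -/
def wordAt (v : ℤ → Bool) (m : ℤ) (n : ℕ) : List Bool :=
  (List.range n).map (fun i => v (m + i))

/-- the hull `Ω`: closure of the set of translates of `v₀`. -/
def hull (α : ℝ) : Set (ℤ → Bool) :=
  closure {u | ∃ m : ℤ, u = fun n => v0 α (n - m)}


theorem word_length (α : ℝ) (m n : ℕ) : (word α m n).length = n := by
  simp [word]

theorem word_eq_word_iff (α : ℝ) (m m' n : ℕ) :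
    word α m n = word α m' n ↔
      ∀ i : ℕ, i < n → v0 α ((m : ℤ) + 1 + i) = v0 α ((m' : ℤ) + 1 + i) := by
  simp only [word, List.map_inj_left, List.bind_eq_flatMap, List.pure_def, List.mem_flatMap,
    List.mem_range, List.mem_singleton]
  exact ⟨fun h i hi => h _ ⟨i, hi, rfl⟩, fun h a ⟨i, hi, ha⟩ => ha ▸ h i hi⟩

/-- The circle map sequence is the sequence of first differences of `⌊kα⌋`. -/
theorem v0_toInt (α : ℝ) (h0 : 0 < α) (h1 : α < 1) (k : ℤ) :
    (if v0 α k = true then (1 : ℤ) else 0) = ⌊((k : ℝ) + 1) * α⌋ - ⌊(k : ℝ) * α⌋ := by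
  have hfl := Int.floor_add_fract ((k : ℝ) * α)
  have hn := Int.fract_nonneg ((k : ℝ) * α)
  have hl := Int.fract_lt_one ((k : ℝ) * α)
  by_cases h : 1 - α ≤ Int.fract ((k : ℝ) * α)
  · have : ⌊((k : ℝ) + 1) * α⌋ = ⌊(k : ℝ) * α⌋ + 1 := by
      rw [Int.floor_eq_iff]
      push_cast
      constructor <;> linarith
    simp [v0, h, this]
  · have : ⌊((k : ℝ) + 1) * α⌋ = ⌊(k : ℝ) * α⌋ := by
      rw [Int.floor_eq_iff]
      constructor <;> linarith
    simp [v0, h, this]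

theorem v0_eq_iff (α : ℝ) (h0 : 0 < α) (h1 : α < 1) (k l : ℤ) :
    v0 α k = v0 α l ↔
      ⌊((k : ℝ) + 1) * α⌋ - ⌊(k : ℝ) * α⌋ = ⌊((l : ℝ) + 1) * α⌋ - ⌊(l : ℝ) * α⌋ := by
  rw [← v0_toInt α h0 h1 k, ← v0_toInt α h0 h1 l]
  cases v0 α k <;> cases v0 α l <;> simp

/-- If the letters following `x` and `y` agree up to
distance `n`, then so do the increments of `⌊kα⌋`. -/
theorem floor_sub_floor_eq (α : ℝ) (h0 : 0 < α) (h1 : α < 1) (x y : ℤ) (n : ℕ)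
    (h : ∀ i : ℕ, i < n → v0 α (x + 1 + i) = v0 α (y + 1 + i)) (j : ℕ) (hj : j ≤ n) :
    ⌊((x : ℝ) + 1 + j) * α⌋ - ⌊((x : ℝ) + 1) * α⌋ =
      ⌊((y : ℝ) + 1 + j) * α⌋ - ⌊((y : ℝ) + 1) * α⌋ := by
  induction j with
  | zero => simp
  | succ j ih =>
    have h' := (v0_eq_iff α h0 h1 _ _).1 (h j hj)
    have ih' := ih (by omega)
    push_cast at h' ⊢
    simp only [← add_assoc]
    omega

/-- A word that can be extended to the left by both letters is a prefix of `(v₀(1), v₀(2), …)`. -/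
theorem eq_prefix_of_leftSpecial (α : ℝ) (h0 : 0 < α) (h1 : α < 1) (x y : ℤ) (n : ℕ)
    (h : ∀ i : ℕ, i < n → v0 α (x + 1 + i) = v0 α (y + 1 + i))
    (hx : v0 α x = true) (hy : v0 α y = false) (i : ℕ) (hi : i < n) :
    v0 α (x + 1 + i) = v0 α (1 + i) := by
  have hfx := v0_toInt α h0 h1 x
  have hfy := v0_toInt α h0 h1 y
  simp only [hx, hy, if_true, Bool.false_eq_true, if_false] at hfx hfy
  have key : ∀ j : ℕ, j ≤ n →
      ⌊((x : ℝ) + 1 + j) * α⌋ - ⌊((x : ℝ) + 1) * α⌋ = ⌊((j : ℝ) + 1) * α⌋ := by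
    intro j hj
    have e := floor_sub_floor_eq α h0 h1 x y n h j hj
    apply le_antisymm
    · rw [Int.le_floor]
      have a := Int.floor_le (((x : ℝ) + 1 + j) * α)
      have b := Int.floor_le ((x : ℝ) * α)
      have c : (⌊((x : ℝ) + 1) * α⌋ : ℝ) = ⌊(x : ℝ) * α⌋ + 1 := by
        exact_mod_cast (by omega : ⌊((x : ℝ) + 1) * α⌋ = ⌊(x : ℝ) * α⌋ + 1)
      have d := Int.lt_floor_add_one ((x : ℝ) * α)
      push_cast
      linarith
    · rw [e]
      have b := Int.floor_le ((y : ℝ) * α)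
      have c : (⌊((y : ℝ) + 1) * α⌋ : ℝ) = ⌊(y : ℝ) * α⌋ := by
        exact_mod_cast (by omega : ⌊((y : ℝ) + 1) * α⌋ = ⌊(y : ℝ) * α⌋)
      rw [← Int.floor_sub_intCast]
      apply Int.floor_le_floor
      rw [c]
      linarith
  rw [v0_eq_iff α h0 h1]
  have k0 := key i hi.le
  have k1 := key (i + 1) hi
  push_cast at k0 k1 ⊢
  rw [add_comm (1 : ℝ) i]
  simp only [← add_assoc] at k1 ⊢
  omega

theorem exhaust_set_nonempty (α : ℝ) (n : ℕ) :
    {N | ∀ w : List Bool, w.length = n → IsFactor α w → OccursIn α w N}.Nonempty := by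
  have hfin : {w : List Bool | w.length = n}.Finite := List.finite_length_eq Bool n
  choose! pos hpos using fun (w : List Bool) (h : IsFactor α w) => h
  obtain ⟨B, hB⟩ := (hfin.image pos).bddAbove
  refine ⟨B + n, fun w hw hf => ⟨pos w, ?_, hpos w hf⟩⟩
  have := hB (Set.mem_image_of_mem pos hw)
  omega

/-- The factor completing the list of factors of length `n` ends at `exhaust α n`, and this is its
first occurrence. -/
theorem exists_last_factor (α : ℝ) (n : ℕ) (hn : 1 ≤ n) :
    ∃ M : ℕ, exhaust α n = M + n ∧ (∀ m < M, word α m n ≠ word α M n) ∧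
      ∀ k : ℕ, ∃ m ≤ M, word α k n = word α m n := by
  have hmem : ∀ w : List Bool, w.length = n → IsFactor α w → OccursIn α w (exhaust α n) :=
    Nat.sInf_mem (exhaust_set_nonempty α n)
  have hfac : ∀ k, IsFactor α (word α k n) := fun k => ⟨k, by rw [word_length]⟩
  have hle : n ≤ exhaust α n := by
    obtain ⟨m, hm, -⟩ := hmem _ (word_length α 0 n) (hfac 0)
    rw [word_length] at hm
    omega
  have hnot := Nat.notMem_of_lt_sInf (show exhaust α n - 1 < exhaust α n by omega)
  simp only [Set.mem_ofPred_eq, not_forall] at hnot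
  obtain ⟨w, hw, hwf, hwo⟩ := hnot
  obtain ⟨M, hM, hwM⟩ := hmem w hw hwf
  rw [hw] at hM hwM
  have hM' : exhaust α n = M + n := by
    by_contra hne
    exact hwo ⟨M, by omega, by rw [hw]; exact hwM⟩
  refine ⟨M, hM', fun m hm he => hwo ⟨m, by omega, by rw [hw, he]; exact hwM⟩, fun k => ?_⟩
  obtain ⟨m, hm, he⟩ := hmem _ (word_length α k n) (hfac k)
  rw [word_length] at hm he
  exact ⟨m, by omega, he⟩

/-- `v₀(f(n+1)) = v₀(n)` for all `n ≥ 1`: the sequence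
`(v₀(f(n)))_{n ≥ 2}` coincides with the original circle map sequence `(v₀(n))_{n ≥ 1}`. -/
theorem v0_exhaust (α : ℝ) (hirr : Irrational α) (h0 : 0 < α) (h1 : α < 1) :
    ∀ n : ℕ, 1 ≤ n → v0 α (exhaust α (n + 1)) = v0 α n := by
  intro n hn
  obtain ⟨M, hM, hfirst, hall⟩ := exists_last_factor α (n + 1) (by omega)
  rw [hM]
  by_contra hne
  obtain ⟨m, hmM, hm⟩ := hall (M + 1)
  rw [word_eq_word_iff] at hm
  rcases m with _ | m
  · apply hne
    have := hm (n - 1) (by omega)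
    rw [Nat.cast_sub hn] at this
    push_cast at this ⊢
    convert this using 2 <;> ring
  · have hagree : ∀ i : ℕ, i < n → v0 α ((M : ℤ) + 1 + 1 + i) = v0 α ((m : ℤ) + 1 + 1 + i) := by
      intro i hi
      exact_mod_cast hm i (by omega)
    have hlast : v0 α ((M : ℤ) + 1 + 1 + (n - 1 : ℕ)) ≠ v0 α (1 + (n - 1 : ℕ)) := by
      intro h
      apply hne
      rw [Nat.cast_sub hn] at h
      push_cast at h ⊢
      convert h using 2 <;> ring
    have hhead : v0 α ((M : ℤ) + 1) = v0 α ((m : ℤ) + 1) := by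
      cases ha : v0 α ((M : ℤ) + 1) <;> cases hb : v0 α ((m : ℤ) + 1) <;> try rfl
      · refine absurd ?_ hlast
        rw [hagree _ (by omega)]
        exact eq_prefix_of_leftSpecial α h0 h1 _ _ n (fun i hi => (hagree i hi).symm) hb ha _
          (by omega)
      · exact absurd (eq_prefix_of_leftSpecial α h0 h1 _ _ n hagree ha hb _ (by omega)) hlast
    refine hfirst m (by omega) ((word_eq_word_iff α _ _ _).2 fun i hi => ?_)
    rcases i with _ | i
    · simpa using hhead.symm
    · have := (hagree i (by omega)).symm
      push_cast
      convert this using 2 <;> ring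

end
end

section
/- Let k ≥ 2, 0 ≤ j ≤ F_{k−1} − 1, and n = F_k + j. For a factor w of v₀ of length n let I(w) = {θ ∈ [0,1) : (v_θ(0), v_θ(1), …, v_θ(n−1)) = w}. Then the Lebesgue measure of I(w) belongs to {τ^{−(k−1)}, τ^{−k}, τ^{−(k+1)}}; it equals τ^{−(k−1)} precisely when w occurs in the prefix (v₀(1), …, v₀(F_{k+1} − 2)), and the number of factors w of length n with measure τ^{−(k−1)}, τ^{−k}, τ^{−(k+1)} is F_{k−1} − j − 1, F_{k−2} + j + 1, and j + 1 respectively. -/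
open scoped Classical

noncomputable section

/-- Fibonacci numbers with `F 0 = 1`, `F 1 = 1`, `F 2 = 2`. -/
def F (n : ℕ) : ℕ := Nat.fib (n + 1)

/-- The circle map sequence with phase `θ`. -/
def vth (α θ : ℝ) (n : ℤ) : Bool := decide (1 - α ≤ Int.fract ((n : ℝ) * α + θ))

/-- `I(w) = {θ ∈ [0,1) : (v_θ(0), …, v_θ(n-1)) = w}` for a word `w` of length `n`. -/
def phaseSet (α : ℝ) (w : List Bool) : Set ℝ :=
  {θ : ℝ | θ ∈ Set.Ico (0 : ℝ) 1 ∧ wordAt (vth α θ) 0 w.length = w}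

open Nat (fib)

section Breakpoints

variable {α : ℝ}

/-- The representative in `[0, 1)` of `-iα`; for `i ≤ n` these are the phases at which the word
`(v_θ(0), …, v_θ(n-1))` changes. -/
def breakpoint (α : ℝ) (i : ℕ) : ℝ := Int.fract (-(i * α))

lemma breakpoint_nonneg (α : ℝ) (i : ℕ) : 0 ≤ breakpoint α i := Int.fract_nonneg _

lemma breakpoint_lt_one (α : ℝ) (i : ℕ) : breakpoint α i < 1 := Int.fract_lt_one _

lemma breakpoint_mem_Ico (α : ℝ) (i : ℕ) : breakpoint α i ∈ Set.Ico (0 : ℝ) 1 :=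
  ⟨breakpoint_nonneg α i, breakpoint_lt_one α i⟩

lemma breakpoint_zero (α : ℝ) : breakpoint α 0 = 0 := by simp [breakpoint]

lemma fract_breakpoint_sub (α : ℝ) (i i' : ℕ) :
    Int.fract (breakpoint α i' - breakpoint α i) = Int.fract (((i : ℤ) - (i' : ℤ) : ℤ) * α) := by
  rw [Int.fract_eq_fract]
  refine ⟨⌊-((i : ℝ) * α)⌋ - ⌊-((i' : ℝ) * α)⌋, ?_⟩
  simp only [breakpoint, Int.fract]
  push_cast
  ring

lemma floor_mul_add_eq {θ : ℝ} (hθ : θ ∈ Set.Ico (0 : ℝ) 1) (i : ℕ) :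
    ⌊(i : ℝ) * α + θ⌋ = -⌊-((i : ℝ) * α)⌋ + if breakpoint α i ≤ θ then 0 else -1 := by
  have h0 := breakpoint_nonneg α i
  have h1 := breakpoint_lt_one α i
  have h2 : breakpoint α i = -(i * α) - ⌊-((i : ℝ) * α)⌋ := rfl
  obtain ⟨h3, h4⟩ := hθ
  rw [Int.floor_eq_iff]
  split_ifs <;> push_cast <;> constructor <;> linarith

lemma floor_mul_add_eq_iff {θ θ' : ℝ} (hθ : θ ∈ Set.Ico (0 : ℝ) 1)
    (hθ' : θ' ∈ Set.Ico (0 : ℝ) 1) (i : ℕ) :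
    ⌊(i : ℝ) * α + θ⌋ = ⌊(i : ℝ) * α + θ'⌋ ↔ (breakpoint α i ≤ θ ↔ breakpoint α i ≤ θ') := by
  rw [floor_mul_add_eq hθ, floor_mul_add_eq hθ']
  split_ifs with h h' h' <;> simp [h, h']

lemma floor_succ_mul_add (h0 : 0 < α) (h1 : α < 1) (θ : ℝ) (l : ℕ) :
    ⌊((l + 1 : ℕ) : ℝ) * α + θ⌋ = ⌊(l : ℝ) * α + θ⌋ + if vth α θ l then 1 else 0 := by
  have h2 := Int.fract_nonneg ((l : ℝ) * α + θ)
  have h3 := Int.fract_lt_one ((l : ℝ) * α + θ)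
  have h4 := Int.floor_add_fract ((l : ℝ) * α + θ)
  rw [Int.floor_eq_iff]
  simp only [vth, decide_eq_true_eq, Int.cast_natCast]
  split_ifs <;> push_cast <;> constructor <;> linarith

lemma wordAt_vth_eq_iff (h0 : 0 < α) (h1 : α < 1) {θ θ' : ℝ} (hθ : θ ∈ Set.Ico (0 : ℝ) 1)
    (hθ' : θ' ∈ Set.Ico (0 : ℝ) 1) (n : ℕ) :
    wordAt (vth α θ) 0 n = wordAt (vth α θ') 0 n ↔
      ∀ i ≤ n, (breakpoint α i ≤ θ ↔ breakpoint α i ≤ θ') := by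
  have key : wordAt (vth α θ) 0 n = wordAt (vth α θ') 0 n ↔
      ∀ l < n, vth α θ (l : ℕ) = vth α θ' (l : ℕ) := by
    simp [wordAt]
    exact ⟨fun h l hl => h l l hl rfl, fun h a l hl ha => ha ▸ h l hl⟩
  simp only [← floor_mul_add_eq_iff hθ hθ']
  rw [key]
  constructor
  · intro h i
    induction i with
    | zero => simp [Int.floor_eq_zero_iff.2 hθ, Int.floor_eq_zero_iff.2 hθ']
    | succ l ih =>
      intro hl
      rw [floor_succ_mul_add h0 h1, floor_succ_mul_add h0 h1, ih (by omega), h l (by omega)]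
  · intro h l hl
    have e1 := floor_succ_mul_add h0 h1 θ l
    have e2 := floor_succ_mul_add h0 h1 θ' l
    rw [h _ hl, e2, h _ hl.le] at e1
    cases h5 : vth α θ l <;> cases h6 : vth α θ' l <;> simp_all

lemma word_eq_wordAt (α : ℝ) (p n : ℕ) :
    word α p n = wordAt (vth α (Int.fract ((p + 1 : ℕ) * α))) 0 n := by
  unfold word wordAt
  refine List.map_congr_left fun l _ => ?_
  have : Int.fract (((p : ℤ) + 1 + l : ℤ) * α) =
      Int.fract (((0 + l : ℤ) : ℝ) * α + Int.fract (((p + 1 : ℕ) : ℝ) * α)) := by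
    rw [Int.fract_eq_fract]
    refine ⟨⌊((p + 1 : ℕ) : ℝ) * α⌋, ?_⟩
    simp only [Int.fract]
    push_cast
    ring
  simp only [v0, vth, this]

/-- Every phase has the same word as the largest breakpoint not exceeding it. -/
lemma exists_breakpoint_wordAt_eq (h0 : 0 < α) (h1 : α < 1) {θ : ℝ}
    (hθ : θ ∈ Set.Ico (0 : ℝ) 1) (n : ℕ) :
    ∃ i ≤ n, wordAt (vth α θ) 0 n = wordAt (vth α (breakpoint α i)) 0 n := by
  obtain ⟨i, hi, hmax⟩ := Finset.exists_max_image
    ((Finset.range (n + 1)).filter fun i => breakpoint α i ≤ θ) (breakpoint α)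
    ⟨0, by simpa [breakpoint_zero] using hθ.1⟩
  simp only [Finset.mem_filter, Finset.mem_range, Nat.lt_succ_iff] at hi hmax
  refine ⟨i, hi.1, (wordAt_vth_eq_iff h0 h1 hθ (breakpoint_mem_Ico α i) n).2 fun l hl => ?_⟩
  exact ⟨fun h => hmax l ⟨hl, h⟩, fun h => h.trans hi.2⟩

end Breakpoints

section FibonacciGaps

variable {α : ℝ}

lemma fib_mul_sub_fib (hsq : α ^ 2 = 1 - α) (m : ℕ) :
    (fib (m + 1) : ℝ) * α - fib m = (-1) ^ m * α ^ (m + 1) := by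
  suffices h : (fib (m + 1) : ℝ) * α - fib m = (-1) ^ m * α ^ (m + 1) ∧
      (fib (m + 2) : ℝ) * α - fib (m + 1) = (-1) ^ (m + 1) * α ^ (m + 2) from h.1
  induction m with
  | zero => simp; linarith
  | succ m ih =>
    refine ⟨ih.2, ?_⟩
    rw [Nat.fib_add_two (n := m + 1), Nat.fib_add_two (n := m)]
    have h2 := ih.2
    rw [Nat.fib_add_two (n := m)] at h2
    push_cast at h2 ⊢
    linear_combination ih.1 + h2 - (-1) ^ m * α ^ (m + 1) * hsq

/-- Consecutive pairs of consecutive Fibonacci numbers form a basis of `ℤ²`. -/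
lemma exists_fib_coords (m : ℕ) (d p : ℤ) :
    ∃ a b : ℤ, d = a * fib (m + 2) + b * fib (m + 1) ∧ p = a * fib (m + 1) + b * fib m := by
  induction m with
  | zero => exact ⟨p, d - p, by simp⟩
  | succ m ih =>
    obtain ⟨a, b, h, h'⟩ := ih
    refine ⟨b, a - b, ?_, ?_⟩
    · rw [h, Nat.fib_add_two (n := m + 1)]; push_cast; ring
    · rw [h', Nat.fib_add_two (n := m)]; push_cast; ring

lemma lattice_gap_le (h0 : 0 < α) (h1 : α < 1) {A B n e d a b : ℤ} (hB : 0 < B) (hA : 0 < A)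
    (hn : n < A + B) (hde : d ≤ e) (hdn : e - n ≤ d) (he : 0 ≤ e) (hen : e ≤ n)
    (hd : d = a * A + b * B) (hd0 : d ≠ 0) (hpos : 0 ≤ a * α - b) :
    (if e + B ≤ n then 1 else if A ≤ e then α else 1 + α) ≤ a * α - b := by
  rcases lt_trichotomy b 0 with hb | rfl | hb
  · have hb' : (b : ℝ) ≤ -1 := by exact_mod_cast (by omega : b ≤ -1)
    rcases lt_trichotomy a 0 with ha | rfl | ha
    · nlinarith
    · have : e + B ≤ n := by nlinarith
      simp only [this, if_true]
      push_cast
      linarith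
    · have ha' : (1 : ℝ) ≤ a := by exact_mod_cast ha
      have : α ≤ a * α := by nlinarith
      split_ifs <;> linarith
  · have ha : 0 < a := by
      rcases lt_trichotomy a 0 with ha | rfl | ha
      · have : (a : ℝ) < 0 := by exact_mod_cast ha
        push_cast at hpos
        nlinarith
      · simp at hd; omega
      · exact ha
    have hAe : A ≤ e := by nlinarith
    have ha' : (1 : ℝ) ≤ a := by exact_mod_cast ha
    rw [if_neg (by omega), if_pos hAe]
    push_cast
    nlinarith
  · have hb' : (1 : ℝ) ≤ b := by exact_mod_cast hb
    have ha : (0 : ℝ) < a := by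
      by_contra h
      nlinarith
    have ha : 0 < a := by exact_mod_cast ha
    nlinarith

/-- With `A = fib (m + 2)` and `B = fib (m + 1)`, the exponent `t` such that the gap to the right
of the breakpoint labelled `e` is `α ^ t`. -/
def gapExp (m n e : ℕ) : ℕ :=
  if e + fib (m + 1) ≤ n then m + 1 else if fib (m + 2) ≤ e then m + 2 else m

/-- Relabelling of `{0, …, n}` that absorbs the orientation of the `m`-th convergent. -/
def orient (m n e : ℕ) : ℕ := if Even m then n - e else e

lemma orient_le {m n e : ℕ} (he : e ≤ n) : orient m n e ≤ n := by
  unfold orient; split_ifs <;> omega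

lemma orient_orient {m n e : ℕ} (he : e ≤ n) : orient m n (orient m n e) = e := by
  unfold orient; split_ifs <;> omega

lemma orient_sub_orient {m n e e' : ℕ} (he : e ≤ n) (he' : e' ≤ n) :
    (orient m n e : ℤ) - orient m n e' = (-1) ^ (m + 1) * ((e : ℤ) - e') := by
  unfold orient
  rcases Nat.even_or_odd m with h | h
  · simp only [h, if_true, pow_succ, h.neg_one_pow]; omega
  · simp only [Nat.not_even_iff_odd.2 h, if_false, pow_succ, h.neg_one_pow]; omega

lemma gapExp_le (m n e : ℕ) : gapExp m n e ≤ m + 2 := by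
  unfold gapExp; split_ifs <;> omega

lemma pow_gapExp (hsq : α ^ 2 = 1 - α) (m n e : ℕ) :
    α ^ gapExp m n e = α ^ (m + 1) *
      (if e + fib (m + 1) ≤ n then 1 else if fib (m + 2) ≤ e then α else 1 + α) := by
  unfold gapExp
  split_ifs
  · ring
  · ring
  · linear_combination -α ^ m * hsq

lemma pow_gapExp_le_fract (hsq : α ^ 2 = 1 - α) (h0 : 0 < α) (h1 : α < 1) {m n e e' : ℕ}
    (hn : n < fib (m + 3)) (he : e ≤ n) (he' : e' ≤ n) (hne : e ≠ e') :
    α ^ gapExp m n e ≤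
      Int.fract (breakpoint α (orient m n e') - breakpoint α (orient m n e)) := by
  rw [fract_breakpoint_sub, orient_sub_orient he he']
  set ε : ℤ := (-1) ^ (m + 1) with hε
  have hεε : ε * ε = 1 := by rw [hε, ← mul_pow]; simp
  have hεε' : (ε : ℝ) * ε = 1 := by exact_mod_cast hεε
  have hεr : (ε : ℝ) = (-1) ^ (m + 1) := by rw [hε]; push_cast; rfl
  set d : ℤ := (e : ℤ) - e' with hd
  set p : ℤ := ⌊((ε * d : ℤ) : ℝ) * α⌋ with hp
  have hfr : Int.fract (((ε * d : ℤ) : ℝ) * α) = ((ε * d : ℤ) : ℝ) * α - p := rfl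
  obtain ⟨a, b, hda, hpb⟩ := exists_fib_coords m d (ε * p)
  have hform : Int.fract (((ε * d : ℤ) : ℝ) * α) = α ^ (m + 1) * (a * α - b) := by
    have e1 := fib_mul_sub_fib hsq m
    have e2 := fib_mul_sub_fib hsq (m + 1)
    have e3 : (d : ℝ) = a * fib (m + 2) + b * fib (m + 1) := by exact_mod_cast hda
    have e4 : (ε : ℝ) * p = a * fib (m + 1) + b * fib m := by exact_mod_cast hpb
    have e5 : (-1 : ℝ) ^ m = -ε := by rw [hεr]; ring
    rw [← hεr] at e2
    rw [e5] at e1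
    rw [hfr]
    push_cast
    linear_combination ε * α * e3 + (p + α ^ (m + 1) * a * α - α ^ (m + 1) * b) * hεε' - ε * e4 +
      a * ε * e2 + b * ε * e1
  have hpow : 0 < α ^ (m + 1) := pow_pos h0 _
  have hnn := Int.fract_nonneg (((ε * d : ℤ) : ℝ) * α)
  rw [hform] at hnn ⊢
  rw [pow_gapExp hsq]
  have hB : 0 < fib (m + 1) := Nat.fib_pos.2 (by omega)
  have hA : 0 < fib (m + 2) := Nat.fib_pos.2 (by omega)
  have hfib : fib (m + 3) = fib (m + 1) + fib (m + 2) := Nat.fib_add_two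
  have key := lattice_gap_le h0 h1 (A := fib (m + 2)) (B := fib (m + 1)) (n := n) (e := e)
    (d := d) (a := a) (b := b) (by omega) (by omega) (by omega) (by omega) (by omega) (by omega)
    (by omega) hda (by omega) (nonneg_of_mul_nonneg_right hnn hpow)
  refine mul_le_mul_of_nonneg_left ?_ hpow.le
  exact_mod_cast key

lemma exists_fract_eq_pow_gapExp (hsq : α ^ 2 = 1 - α) (h0 : 0 < α) (h1 : α < 1) {m n e : ℕ}
    (hm : 1 ≤ m) (hn : fib (m + 2) ≤ n) (he : e ≤ n) :
    ∃ e' ≤ n,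
      Int.fract (breakpoint α (orient m n e') - breakpoint α (orient m n e)) =
        α ^ gapExp m n e := by
  have e1 := fib_mul_sub_fib hsq m
  have e2 := fib_mul_sub_fib hsq (m + 1)
  have hεε : ((-1 : ℝ) ^ m) * (-1) ^ m = 1 := by rw [← mul_pow]; simp
  have hBA : fib (m + 1) ≤ fib (m + 2) := Nat.fib_mono (by omega)
  have hlt : α ^ gapExp m n e < 1 :=
    pow_lt_one₀ h0.le h1 (by unfold gapExp; split_ifs <;> omega)
  suffices h : ∃ e' ≤ n, ∃ z : ℤ,
      ((-1) ^ (m + 1) * ((e : ℤ) - e') : ℤ) * α - α ^ gapExp m n e = z by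
    obtain ⟨e', he', z, hz⟩ := h
    refine ⟨e', he', ?_⟩
    rw [fract_breakpoint_sub, orient_sub_orient he he', Int.fract_eq_iff]
    exact ⟨by positivity, hlt, z, hz⟩
  rw [pow_gapExp hsq]
  split_ifs with hc hc'
  · refine ⟨e + fib (m + 1), hc, (-1) ^ m * fib m, ?_⟩
    push_cast
    linear_combination (-1) ^ m * e1 + α ^ (m + 1) * hεε
  · refine ⟨e - fib (m + 2), by omega, (-1) ^ (m + 1) * fib (m + 1), ?_⟩
    push_cast [hc']
    linear_combination (-1) ^ (m + 1) * e2 + α ^ (m + 2) * hεε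
  · refine ⟨e + fib (m + 1) - fib (m + 2), by omega,
      (-1) ^ m * fib m + (-1) ^ (m + 1) * fib (m + 1), ?_⟩
    push_cast [(by omega : fib (m + 2) ≤ e + fib (m + 1))]
    linear_combination (-1) ^ m * e1 + (-1) ^ (m + 1) * e2 + (α ^ (m + 1) + α ^ (m + 2)) * hεε

lemma breakpoint_add_pow_gapExp_le_one (hsq : α ^ 2 = 1 - α) (h0 : 0 < α) (h1 : α < 1)
    {m n e : ℕ} (hn : n < fib (m + 3)) (he : e ≤ n) :
    breakpoint α (orient m n e) + α ^ gapExp m n e ≤ 1 := by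
  rcases eq_or_ne e (orient m n 0) with rfl | hne
  · rw [orient_orient (Nat.zero_le n), breakpoint_zero, zero_add]
    exact pow_le_one₀ h0.le h1.le
  · have h := pow_gapExp_le_fract hsq h0 h1 hn he (orient_le (m := m) (Nat.zero_le n)) hne
    rw [orient_orient (Nat.zero_le n), breakpoint_zero, zero_sub] at h
    have hself : Int.fract (breakpoint α (orient m n e)) = breakpoint α (orient m n e) :=
      Int.fract_eq_self.2 (breakpoint_mem_Ico _ _)
    have hpow := pow_pos h0 (gapExp m n e)
    rw [Int.fract_neg, hself] at h
    · linarith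
    · rw [hself]
      intro h00
      rw [h00] at h
      simp at h
      linarith

/-- The word of length `n` read from the breakpoint labelled `e`. -/
def breakWord (α : ℝ) (m n e : ℕ) : List Bool :=
  wordAt (vth α (breakpoint α (orient m n e))) 0 n

lemma length_breakWord (α : ℝ) (m n e : ℕ) : (breakWord α m n e).length = n := by
  simp [breakWord, wordAt]

lemma wordAt_eq_breakWord_iff (hsq : α ^ 2 = 1 - α) (h0 : 0 < α) (h1 : α < 1) {m n e : ℕ}
    (hm : 1 ≤ m) (hn : fib (m + 2) ≤ n) (hn' : n < fib (m + 3)) (he : e ≤ n) {θ : ℝ}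
    (hθ : θ ∈ Set.Ico (0 : ℝ) 1) :
    wordAt (vth α θ) 0 n = breakWord α m n e ↔
      θ ∈ Set.Ico (breakpoint α (orient m n e))
        (breakpoint α (orient m n e) + α ^ gapExp m n e) := by
  have hle : ∀ i, Int.fract (breakpoint α i - breakpoint α (orient m n e)) =
      breakpoint α i - breakpoint α (orient m n e) ∨
      breakpoint α i < breakpoint α (orient m n e) ∧
      Int.fract (breakpoint α i - breakpoint α (orient m n e)) =
      breakpoint α i - breakpoint α (orient m n e) + 1 := by
    intro i
    have a1 := breakpoint_mem_Ico α i
    have a2 := breakpoint_mem_Ico α (orient m n e)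
    rcases le_or_gt (breakpoint α (orient m n e)) (breakpoint α i) with h | h
    · exact Or.inl (Int.fract_eq_self.2 ⟨by linarith, by linarith [a1.2, a2.1]⟩)
    · refine Or.inr ⟨h, Int.fract_eq_iff.2 ⟨by linarith [a1.1, a2.2], by linarith, -1, ?_⟩⟩
      push_cast
      ring
  rw [breakWord, wordAt_vth_eq_iff h0 h1 hθ (breakpoint_mem_Ico _ _)]
  constructor
  · intro h
    refine ⟨(h _ (orient_le he)).2 le_rfl, ?_⟩
    by_contra hge
    rw [not_lt] at hge
    obtain ⟨e', he', hfr⟩ := exists_fract_eq_pow_gapExp hsq h0 h1 hm hn he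
    have hpow := pow_pos h0 (gapExp m n e)
    rcases hle (orient m n e') with h2 | ⟨-, h2⟩
    · have := (h _ (orient_le he')).1 (by linarith)
      linarith
    · linarith [breakpoint_nonneg α (orient m n e'), hθ.2]
  · rintro ⟨h2, h3⟩ i hi
    refine ⟨fun h4 => ?_, fun h => h.trans h2⟩
    by_contra h5
    rw [not_le] at h5
    have hne : e ≠ orient m n i := by
      rintro rfl
      rw [orient_orient hi] at h5
      exact lt_irrefl _ h5
    have h6 := pow_gapExp_le_fract hsq h0 h1 hn' he (orient_le (m := m) hi) hne
    rw [orient_orient hi] at h6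
    rcases hle i with h7 | ⟨h7, -⟩ <;> linarith

lemma breakWord_injOn (hsq : α ^ 2 = 1 - α) (h0 : 0 < α) (h1 : α < 1) {m n : ℕ}
    (hm : 1 ≤ m) (hn : fib (m + 2) ≤ n) (hn' : n < fib (m + 3)) :
    Set.InjOn (breakWord α m n) {e | e ≤ n} := by
  intro e he e' he' h
  by_contra hne
  obtain ⟨h2, h3⟩ := (wordAt_eq_breakWord_iff hsq h0 h1 hm hn hn' he
    (breakpoint_mem_Ico α (orient m n e'))).1 h.symm
  have h4 := pow_gapExp_le_fract hsq h0 h1 hn' he he' hne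
  rw [Int.fract_eq_self.2 ⟨by linarith, by
    linarith [breakpoint_lt_one α (orient m n e'), breakpoint_nonneg α (orient m n e)]⟩] at h4
  linarith

lemma volume_phaseSet_breakWord (hsq : α ^ 2 = 1 - α) (h0 : 0 < α) (h1 : α < 1) {m n e : ℕ}
    (hm : 1 ≤ m) (hn : fib (m + 2) ≤ n) (hn' : n < fib (m + 3)) (he : e ≤ n) :
    MeasureTheory.volume (phaseSet α (breakWord α m n e)) =
      ENNReal.ofReal (α ^ gapExp m n e) := by
  have hset : phaseSet α (breakWord α m n e) = Set.Ico (breakpoint α (orient m n e))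
      (breakpoint α (orient m n e) + α ^ gapExp m n e) := by
    ext θ
    simp only [phaseSet, length_breakWord, Set.mem_ofPred_eq]
    constructor
    · rintro ⟨h, h2⟩
      exact (wordAt_eq_breakWord_iff hsq h0 h1 hm hn hn' he h).1 h2
    · intro h
      have hθ : θ ∈ Set.Ico (0 : ℝ) 1 :=
        ⟨(breakpoint_nonneg _ _).trans h.1,
          h.2.trans_le (breakpoint_add_pow_gapExp_le_one hsq h0 h1 hn' he)⟩
      exact ⟨hθ, (wordAt_eq_breakWord_iff hsq h0 h1 hm hn hn' he hθ).2 h⟩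
  rw [hset, Real.volume_Ico, add_sub_cancel_left]

lemma exists_eq_breakWord (h0 : 0 < α) (h1 : α < 1) (m : ℕ) {w : List Bool}
    (hw : IsFactor α w) : ∃ e ≤ w.length, w = breakWord α m w.length e := by
  obtain ⟨p, hp⟩ := hw
  rw [word_eq_wordAt] at hp
  obtain ⟨i, hi, h⟩ := exists_breakpoint_wordAt_eq h0 h1
    (θ := Int.fract ((p + 1 : ℕ) * α)) ⟨Int.fract_nonneg _, Int.fract_lt_one _⟩ w.length
  refine ⟨orient m w.length i, orient_le hi, ?_⟩
  rw [breakWord, orient_orient hi, ← h]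
  exact hp

lemma word_eq_breakWord (hsq : α ^ 2 = 1 - α) (h0 : 0 < α) (h1 : α < 1) {m n e M p : ℕ}
    (hm : 1 ≤ m) (hn : fib (m + 2) ≤ n) (hn' : n < fib (m + 3)) (he : e ≤ n) (hM : Even M)
    (hp : p + 1 + orient m n e = fib (M + 1)) (hlt : gapExp m n e < M + 1) :
    word α p n = breakWord α m n e := by
  have hpow : α ^ (M + 1) < α ^ gapExp m n e := pow_lt_pow_right_of_lt_one₀ h0 h1 hlt
  have hone := breakpoint_add_pow_gapExp_le_one hsq h0 h1 hn' he
  have hnn := breakpoint_nonneg α (orient m n e)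
  have hpos := pow_pos h0 (M + 1)
  have hfr : Int.fract ((p + 1 : ℕ) * α) = breakpoint α (orient m n e) + α ^ (M + 1) := by
    rw [Int.fract_eq_iff]
    refine ⟨by linarith, by linarith, fib M + ⌊-((orient m n e : ℝ) * α)⌋, ?_⟩
    have e1 := fib_mul_sub_fib hsq M
    rw [hM.neg_one_pow, ← hp] at e1
    simp only [breakpoint, Int.fract]
    push_cast at e1 ⊢
    linarith
  rw [word_eq_wordAt]
  refine (wordAt_eq_breakWord_iff hsq h0 h1 hm hn hn' he
    ⟨Int.fract_nonneg _, Int.fract_lt_one _⟩).2 ?_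
  rw [hfr]
  constructor <;> linarith

lemma isFactor_breakWord (hsq : α ^ 2 = 1 - α) (h0 : 0 < α) (h1 : α < 1) {m n e : ℕ}
    (hm : 1 ≤ m) (hn : fib (m + 2) ≤ n) (hn' : n < fib (m + 3)) (he : e ≤ n) :
    IsFactor α (breakWord α m n e) := by
  have h2 : orient m n e ≤ n := orient_le he
  have h3 : fib (m + 3) ≤ fib (2 * (m + 2) + 1) := Nat.fib_mono (by omega)
  have h4 := gapExp_le m n e
  refine ⟨fib (2 * (m + 2) + 1) - orient m n e - 1, ?_⟩
  rw [length_breakWord]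
  exact (word_eq_breakWord hsq h0 h1 hm hn hn' he (M := 2 * (m + 2)) (even_two_mul _)
    (by omega) (by omega)).symm

lemma occursIn_breakWord_iff (hsq : α ^ 2 = 1 - α) (h0 : 0 < α) (h1 : α < 1) {m n e : ℕ}
    (hm : 1 ≤ m) (hn : fib (m + 2) ≤ n) (hn' : n < fib (m + 3)) (he : e ≤ n) :
    OccursIn α (breakWord α m n e) (fib (m + 3) - 2) ↔ gapExp m n e = m := by
  have hfib : fib (m + 3) = fib (m + 1) + fib (m + 2) := Nat.fib_add_two
  have hBA : fib (m + 1) ≤ fib (m + 2) := Nat.fib_mono (by omega)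
  have hB : 0 < fib (m + 1) := Nat.fib_pos.2 (by omega)
  have hexp : ∀ e, gapExp m n e = m ↔ n < e + fib (m + 1) ∧ e < fib (m + 2) := by
    intro e
    unfold gapExp
    split_ifs <;> omega
  simp only [OccursIn, length_breakWord]
  constructor
  · rintro ⟨p, hp, hw⟩
    obtain ⟨e', he', hg, hw'⟩ : ∃ e' ≤ n, gapExp m n e' = m ∧ word α p n = breakWord α m n e' := by
      rcases Nat.even_or_odd m with hev | hodd
      · have hg : gapExp m n (n - (fib (m + 1) - (p + 1))) = m := (hexp _).2 (by omega)
        refine ⟨n - (fib (m + 1) - (p + 1)), by omega, hg, ?_⟩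
        refine word_eq_breakWord hsq h0 h1 hm hn hn' (by omega) hev ?_ (by omega)
        rw [orient, if_pos hev]
        omega
      · have hg : gapExp m n (fib (m + 2) - (p + 1)) = m := (hexp _).2 (by omega)
        refine ⟨fib (m + 2) - (p + 1), by omega, hg, ?_⟩
        refine word_eq_breakWord hsq h0 h1 hm hn hn' (by omega) hodd.add_one ?_ (by omega)
        rw [orient, if_neg (Nat.not_even_iff_odd.2 hodd)]
        change p + 1 + (fib (m + 2) - (p + 1)) = fib (m + 2)
        omega
    rwa [breakWord_injOn hsq h0 h1 hm hn hn' he he' (hw.trans hw')]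
  · intro hg
    obtain ⟨h2, h3⟩ := (hexp e).1 hg
    rcases Nat.even_or_odd m with hev | hodd
    · refine ⟨fib (m + 1) - (n - e) - 1, by omega, ?_⟩
      refine (word_eq_breakWord hsq h0 h1 hm hn hn' he hev ?_ (by omega)).symm
      rw [orient, if_pos hev]
      omega
    · refine ⟨fib (m + 2) - e - 1, by omega, ?_⟩
      refine (word_eq_breakWord hsq h0 h1 hm hn hn' he hodd.add_one ?_ (by omega)).symm
      rw [orient, if_neg (Nat.not_even_iff_odd.2 hodd)]
      change fib (m + 2) - e - 1 + 1 + e = fib (m + 2)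
      omega

lemma ofReal_pow_eq_iff (h0 : 0 < α) (h1 : α < 1) {s t : ℕ} :
    ENNReal.ofReal (α ^ s) = ENNReal.ofReal (α ^ t) ↔ s = t := by
  rw [ENNReal.ofReal_eq_ofReal_iff (by positivity) (by positivity),
    pow_right_inj₀ h0 h1.ne]

lemma ncard_factors_of_volume (hsq : α ^ 2 = 1 - α) (h0 : 0 < α) (h1 : α < 1) {m n : ℕ}
    (hm : 1 ≤ m) (hn : fib (m + 2) ≤ n) (hn' : n < fib (m + 3)) (t : ℕ) :
    {w : List Bool | w.length = n ∧ IsFactor α w ∧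
        MeasureTheory.volume (phaseSet α w) = ENNReal.ofReal (α ^ t)}.ncard =
      {e | e ≤ n ∧ gapExp m n e = t}.ncard := by
  have hinj : Set.InjOn (breakWord α m n) {e | e ≤ n ∧ gapExp m n e = t} :=
    (breakWord_injOn hsq h0 h1 hm hn hn').mono fun e he => he.1
  rw [← hinj.ncard_image]
  congr 1
  ext w
  constructor
  · rintro ⟨rfl, hw, hv⟩
    obtain ⟨e, he, h⟩ := exists_eq_breakWord h0 h1 m hw
    rw [h, volume_phaseSet_breakWord hsq h0 h1 hm hn hn' he, ofReal_pow_eq_iff h0 h1] at hv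
    exact ⟨e, ⟨he, hv⟩, h.symm⟩
  · rintro ⟨e, ⟨he, rfl⟩, rfl⟩
    exact ⟨length_breakWord _ _ _ _, isFactor_breakWord hsq h0 h1 hm hn hn' he,
      volume_phaseSet_breakWord hsq h0 h1 hm hn hn' he⟩

end FibonacciGaps

/-- For `n = F_k + j` (`k ≥ 2`, `0 ≤ j ≤ F_{k-1} - 1`) and a factor `w` of
`v₀` of length `n`, the Lebesgue measure of `I(w)` belongs to
`{τ^{-(k-1)}, τ^{-k}, τ^{-(k+1)}}`; it equals `τ^{-(k-1)}` exactly when `w` occurs in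
`(v₀(1), …, v₀(F_{k+1} - 2))`, and the number of factors of measure
`τ^{-(k-1)}`, `τ^{-k}`, `τ^{-(k+1)}` is `F_{k-1} - j - 1`, `F_{k-2} + j + 1`, `j + 1`
respectively. -/
theorem phase_interval_measure_fib (α τ : ℝ) (hα : α = (Real.sqrt 5 - 1) / 2)
    (hτ : τ = (1 + Real.sqrt 5) / 2)
    (k j n : ℕ) (hk : 2 ≤ k) (hj : j ≤ F (k - 1) - 1) (hn : n = F k + j) :
    (∀ w : List Bool, w.length = n → IsFactor α w →
        (MeasureTheory.volume (phaseSet α w) = ENNReal.ofReal ((1 / τ) ^ (k - 1)) ∨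
         MeasureTheory.volume (phaseSet α w) = ENNReal.ofReal ((1 / τ) ^ k) ∨
         MeasureTheory.volume (phaseSet α w) = ENNReal.ofReal ((1 / τ) ^ (k + 1)))) ∧
    (∀ w : List Bool, w.length = n → IsFactor α w →
        (MeasureTheory.volume (phaseSet α w) = ENNReal.ofReal ((1 / τ) ^ (k - 1)) ↔
          OccursIn α w (F (k + 1) - 2))) ∧
    {w : List Bool | w.length = n ∧ IsFactor α w ∧
        MeasureTheory.volume (phaseSet α w) = ENNReal.ofReal ((1 / τ) ^ (k - 1))}.ncard
      = F (k - 1) - j - 1 ∧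
    {w : List Bool | w.length = n ∧ IsFactor α w ∧
        MeasureTheory.volume (phaseSet α w) = ENNReal.ofReal ((1 / τ) ^ k)}.ncard
      = F (k - 2) + j + 1 ∧
    {w : List Bool | w.length = n ∧ IsFactor α w ∧
        MeasureTheory.volume (phaseSet α w) = ENNReal.ofReal ((1 / τ) ^ (k + 1))}.ncard
      = j + 1 := by
  have h5 : Real.sqrt 5 ^ 2 = 5 := Real.sq_sqrt (by norm_num)
  have h2 : (2 : ℝ) < Real.sqrt 5 := Real.lt_sqrt_of_sq_lt (by norm_num)
  have h3 : Real.sqrt 5 < 3 := (Real.sqrt_lt' (by norm_num)).2 (by norm_num)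
  have h0 : 0 < α := by rw [hα]; linarith
  have h1 : α < 1 := by rw [hα]; linarith
  have hsq : α ^ 2 = 1 - α := by rw [hα]; linear_combination h5 / 4
  have hτα : 1 / τ = α := by
    rw [div_eq_iff (by rw [hτ]; linarith), hα, hτ]
    linear_combination -h5 / 4
  rw [hτα]
  obtain ⟨m, rfl⟩ : ∃ m, k = m + 1 := ⟨k - 1, by omega⟩
  have hm : 1 ≤ m := by omega
  obtain ⟨l, rfl⟩ : ∃ l, m = l + 1 := ⟨m - 1, by omega⟩
  set m := l + 1
  have hF : F (m + 1 - 2) = fib m := rfl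
  rw [hF]
  simp only [F, Nat.add_sub_cancel] at hj hn ⊢
  rw [show m + 1 + 1 = m + 2 from rfl] at hn ⊢
  have hB : 0 < fib (m + 1) := Nat.fib_pos.2 (by omega)
  have hf2 : fib (m + 2) = fib m + fib (m + 1) := Nat.fib_add_two
  have hf3 : fib (m + 3) = fib (m + 1) + fib (m + 2) := Nat.fib_add_two
  have hn1 : fib (m + 2) ≤ n := by omega
  have hn2 : n < fib (m + 3) := by omega
  refine ⟨?_, ?_, ?_, ?_, ?_⟩
  · rintro w rfl hw
    obtain ⟨e, he, h⟩ := exists_eq_breakWord h0 h1 m hw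
    rw [h, volume_phaseSet_breakWord hsq h0 h1 hm hn1 hn2 he]
    simp only [ofReal_pow_eq_iff h0 h1, gapExp]
    split_ifs <;> omega
  · rintro w rfl hw
    obtain ⟨e, he, h⟩ := exists_eq_breakWord h0 h1 m hw
    rw [h, volume_phaseSet_breakWord hsq h0 h1 hm hn1 hn2 he, ofReal_pow_eq_iff h0 h1]
    exact (occursIn_breakWord_iff hsq h0 h1 hm hn1 hn2 he).symm
  · rw [ncard_factors_of_volume hsq h0 h1 hm hn1 hn2]
    have : {e | e ≤ n ∧ gapExp m n e = m} =
        Finset.Ico (n + 1 - fib (m + 1)) (fib (m + 2)) := by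
      ext e
      simp only [gapExp, Set.mem_ofPred_eq, Finset.coe_Ico, Set.mem_Ico]
      split_ifs <;> omega
    rw [this, Set.ncard_coe_finset, Nat.card_Ico]
    omega
  · rw [ncard_factors_of_volume hsq h0 h1 hm hn1 hn2]
    have : {e | e ≤ n ∧ gapExp m n e = m + 1} = Finset.range (n + 1 - fib (m + 1)) := by
      ext e
      simp only [gapExp, Set.mem_ofPred_eq, Finset.coe_range, Set.mem_Iio]
      split_ifs <;> omega
    rw [this, Set.ncard_coe_finset, Finset.card_range]
    omega
  · rw [ncard_factors_of_volume hsq h0 h1 hm hn1 hn2]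
    have : {e | e ≤ n ∧ gapExp m n e = m + 2} = Finset.Ico (fib (m + 2)) (n + 1) := by
      ext e
      simp only [gapExp, Set.mem_ofPred_eq, Finset.coe_Ico, Set.mem_Ico]
      split_ifs <;> omega
    rw [this, Set.ncard_coe_finset, Nat.card_Ico]
    omega

end
end
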